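/- arXiv:2512.08791 — 2 statements merged into one kernel-verified Lean document; each statement's English description precedes it below -/
import Mathlib

section
/- Let R be a commutative ring, let m ≥ 1, and let t_1, …, t_m ∈ R. Then det_{1≤i,j≤m}( t_i^{m−j} − t_i^{m+j} ) = ∏_{i=1}^{m} (1 − t_i²) · ∏_{1≤i<j≤m} (t_i − t_j)(1 − t_i t_j). -/
/-!
Up to the row factor `1 - t²`, every entry of the matrix is a binary form evaluated at
`(1 + t², t)`: with `z = t⁻¹`, dividing `t ^ (m - j) - t ^ (m + j)` by `t ^ (m - 1) * (1 - t²)`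
leaves the Chebyshev quotient `(z ^ j - z ^ (-j)) / (z - z⁻¹)`, a monic polynomial of degree
`j - 1` in `z + z⁻¹ = (1 + t²) / t`. Homogenizing these polynomials keeps the argument valid when
`t` is not invertible, and a unitriangular change of basis turns them into the monomials of a
projective Vandermonde matrix, whose factors are
`(1 + t_j²) t_i - (1 + t_i²) t_j = (t_i - t_j) (1 - t_i t_j)`.
-/

open Polynomial Polynomial.Chebyshev

section Homogenize

variable {R : Type*} [CommSemiring R]

lemma eval_homogenize_eq_sum_fin (p : R[X]) (n : ℕ) (x y : R) :
    (p.homogenize n).eval ![x, y] =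
      ∑ k : Fin (n + 1), x ^ (k : ℕ) * y ^ (k.rev : ℕ) * p.coeff k := by
  have eval_term (k l : ℕ) :
      (MvPolynomial.monomial (fun₀ | 0 => k | 1 => l) (p.coeff k)).eval ![x, y] =
        x ^ k * y ^ l * p.coeff k := by
    simp [MvPolynomial.eval_monomial, Finsupp.prod_fintype, mul_comm]
  simp only [homogenize, map_sum, eval_term, Finset.Nat.sum_antidiagonal_eq_sum_range_succ_mk,
    Finset.sum_range, Fin.val_rev, Nat.add_sub_add_right]

end Homogenize

section Determinant

variable {R : Type*} [CommRing R] {n : ℕ}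

lemma of_eval_homogenize_eq_projVandermonde_mul (v w : Fin (n + 1) → R) (p : Fin (n + 1) → R[X]) :
    Matrix.of (fun i j => ((p j).homogenize n).eval ![v i, w i]) =
      Matrix.projVandermonde v w * Matrix.of fun k j : Fin (n + 1) => (p j).coeff (k : ℕ) := by
  ext i j
  simp only [Matrix.of_apply, Matrix.mul_apply, Matrix.projVandermonde_apply,
    eval_homogenize_eq_sum_fin]

lemma det_of_coeff_of_natDegree_le (p : Fin n → R[X]) (hp : ∀ i, (p i).natDegree ≤ i) :
    (Matrix.of fun k j : Fin n => (p j).coeff (k : ℕ)).det = ∏ i, (p i).coeff (i : ℕ) :=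
  Matrix.det_of_isUpperTriangular (Matrix.matrixOfPolynomials_blockTriangular p hp)

theorem det_eval_homogenize (v w : Fin (n + 1) → R) (p : Fin (n + 1) → R[X])
    (hp : ∀ i, (p i).natDegree ≤ i) :
    (Matrix.of fun i j => ((p j).homogenize n).eval ![v i, w i]).det =
      (∏ i, ∏ j ∈ Finset.Ioi i, (v j * w i - v i * w j)) * ∏ i, (p i).coeff (i : ℕ) := by
  rw [of_eval_homogenize_eq_projVandermonde_mul, Matrix.det_mul, Matrix.det_projVandermonde,
    det_of_coeff_of_natDegree_le p hp]

end Determinant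

section Chebyshev

variable (R : Type*) [CommRing R]

lemma natDegree_S_natCast_le (n : ℕ) : (S R n).natDegree ≤ n := by
  induction n using Nat.twoStepInduction with
  | zero => simp
  | one => simpa using natDegree_X_le
  | more n ih₀ ih₁ =>
    push_cast at ih₁ ⊢
    rw [S_add_two]
    have natDegree_X_mul_S : (X * S R (n + 1)).natDegree ≤ n + 2 :=
      (natDegree_mul_le_of_le natDegree_X_le ih₁).trans (by lia)
    exact (natDegree_sub_le_of_le natDegree_X_mul_S ih₀).trans (by lia)

lemma coeff_S_natCast_self (n : ℕ) : (S R n).coeff n = 1 := by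
  induction n using Nat.twoStepInduction with
  | zero => simp
  | one => simp
  | more n _ ih₁ =>
    have coeff_S_eq_zero : (S R n).coeff (n + 2) = 0 :=
      coeff_eq_zero_of_natDegree_lt ((natDegree_S_natCast_le R n).trans_lt (by lia))
    push_cast at ih₁ ⊢
    rw [S_add_two, coeff_sub, coeff_X_mul, ih₁, coeff_S_eq_zero, sub_zero]

lemma homogenize_S_add_two (n d : ℕ) :
    (S R (n + 2)).homogenize (n + 2 + d) =
      MvPolynomial.X 0 * (S R (n + 1)).homogenize (n + 1 + d) -
        (S R n).homogenize (n + (d + 2)) := by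
  have natDegree_S_succ_le : (S R (n + 1)).natDegree ≤ n + 1 + d := by
    simpa using (natDegree_S_natCast_le R (n + 1)).trans (Nat.le_add_right _ d)
  have homogenize_X_mul_S : (X * S R (n + 1)).homogenize (n + 2 + d) =
      MvPolynomial.X 0 * (S R (n + 1)).homogenize (n + 1 + d) := by
    rw [show n + 2 + d = 1 + (n + 1 + d) by lia,
      homogenize_mul _ _ natDegree_X_le natDegree_S_succ_le, homogenize_X one_ne_zero,
      Nat.sub_self, pow_zero, mul_one]
  rw [S_add_two, homogenize_sub, homogenize_X_mul_S, show n + 2 + d = n + (d + 2) by lia]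

variable {R}

theorem sq_sub_sq_mul_eval_homogenize_S (x y : R) (n d : ℕ) :
    (x ^ 2 - y ^ 2) * ((S R n).homogenize (n + d)).eval ![x ^ 2 + y ^ 2, x * y] =
      (x * y) ^ d * (x ^ (2 * n + 2) - y ^ (2 * n + 2)) := by
  induction n using Nat.twoStepInduction generalizing d with
  | zero => simp [mul_comm]
  | one =>
    have eval_homogenize_X :
        ((X : R[X]).homogenize (1 + d)).eval ![x ^ 2 + y ^ 2, x * y] =
          (x ^ 2 + y ^ 2) * (x * y) ^ d := by
      simp
    rw [Nat.cast_one, S_one, eval_homogenize_X]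
    ring
  | more n ih₀ ih₁ =>
    push_cast at ih₁ ⊢
    rw [homogenize_S_add_two]
    simp only [map_sub, map_mul, MvPolynomial.eval_X, Matrix.cons_val_zero]
    linear_combination (x ^ 2 + y ^ 2) * ih₁ d - ih₀ (d + 2)

lemma one_sub_sq_mul_eval_homogenize_S (t : R) {j n : ℕ} (hjn : j ≤ n) :
    (1 - t ^ 2) * ((S R j).homogenize n).eval ![1 + t ^ 2, t] =
      t ^ (n - j) - t ^ (n + j + 2) := by
  obtain ⟨d, rfl⟩ := Nat.exists_eq_add_of_le hjn
  have h := sq_sub_sq_mul_eval_homogenize_S 1 t j d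
  simp only [one_pow, one_mul] at h
  rw [h, Nat.add_sub_cancel_left]
  ring

end Chebyshev

/-- For a commutative ring `R`, `m ≥ 1` and `t_1, …, t_m ∈ R`,
`det_{1≤i,j≤m}( t_i^{m−j} − t_i^{m+j} )
  = ∏_{i=1}^{m} (1 − t_i²) · ∏_{1≤i<j≤m} (t_i − t_j)(1 − t_i t_j)`.
(Indices `i j : Fin m` are `0`-based, so the `1`-based exponents `m − j` and
`m + j` become `m − 1 − j` and `m + j + 1`.) -/
theorem det_pow_sub_pow {R : Type*} [CommRing R] (m : ℕ) (hm : 1 ≤ m) (t : Fin m → R) :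
    Matrix.det (Matrix.of fun i j : Fin m =>
        t i ^ (m - 1 - (j : ℕ)) - t i ^ (m + (j : ℕ) + 1)) =
      (∏ i : Fin m, (1 - t i ^ 2)) *
        ∏ i : Fin m, ∏ j ∈ Finset.Ioi i, ((t i - t j) * (1 - t i * t j)) := by
  obtain ⟨n, rfl⟩ := Nat.exists_eq_add_of_le' hm
  have entry_eq (i j : Fin (n + 1)) :
      t i ^ (n + 1 - 1 - (j : ℕ)) - t i ^ (n + 1 + (j : ℕ) + 1) =
        (1 - t i ^ 2) * ((S R (j : ℕ)).homogenize n).eval ![1 + t i ^ 2, t i] := by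
    rw [one_sub_sq_mul_eval_homogenize_S (t i) j.is_le, Nat.add_sub_cancel,
      show n + 1 + (j : ℕ) + 1 = n + j + 2 by lia]
  have factor_eq (i j : Fin (n + 1)) :
      (1 + t j ^ 2) * t i - (1 + t i ^ 2) * t j = (t i - t j) * (1 - t i * t j) := by
    ring
  calc
    _ = (∏ i, (1 - t i ^ 2)) * (Matrix.of fun i j : Fin (n + 1) =>
          ((S R (j : ℕ)).homogenize n).eval ![1 + t i ^ 2, t i]).det := by
      simp only [entry_eq, ← Matrix.det_mul_column, Matrix.of_apply]
    _ = _ := by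
      simp only [det_eval_homogenize _ _ _ fun j : Fin (n + 1) => natDegree_S_natCast_le R j,
        coeff_S_natCast_self, Finset.prod_const_one, mul_one, factor_eq]
end

section
/- Let K be a field, let m ≥ 1, and let t_1, …, t_m be nonzero elements of K. Then det_{1≤i,j≤m}( (t_i + t_i^{−1})^{m−j} ) = (−1)^{m(m−1)/2} · ∏_{i=1}^{m} t_i^{1−m} · ∏_{1≤i<j≤m} (t_i − t_j)(1 − t_i t_j). -/
/-!
Pulling `t_i ^ (1 - m)` out of the `i`-th row leaves the entries `t_i ^ j (1 + t_i²) ^ (m - 1 - j)`,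
`0 ≤ j < m`, of the projective Vandermonde matrix at the points `[t_i : 1 + t_i²]`. Its determinant
is the product over `i < j` of the differences
`t_j (1 + t_i²) - t_i (1 + t_j²) = -(t_i - t_j) (1 - t_i t_j)`, a polynomial identity in the `t_i`.
-/

open Finset
open Matrix (projVandermonde)

theorem sum_card_Ioi_fin (m : ℕ) : ∑ i : Fin m, #(Ioi i) = m * (m - 1) / 2 := by
  simp only [Fin.card_Ioi]
  rw [Fin.sum_univ_eq_sum_range (fun i => m - 1 - i), sum_range_reflect (fun i => i), sum_range_id]

theorem prod_prod_Ioi_neg {M : Type*} [CommMonoid M] [HasDistribNeg M] {m : ℕ}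
    (f : Fin m → Fin m → M) :
    ∏ i, ∏ j ∈ Ioi i, -f i j = (-1) ^ (m * (m - 1) / 2) * ∏ i, ∏ j ∈ Ioi i, f i j := by
  simp only [prod_neg, prod_mul_distrib, prod_pow_eq_pow_sum, sum_card_Ioi_fin]

section CommRing

variable {R : Type*} [CommRing R] {m : ℕ}

theorem det_projVandermonde_one_add_sq (t : Fin m → R) :
    (projVandermonde t fun i => 1 + t i ^ 2).det =
      (-1) ^ (m * (m - 1) / 2) * ∏ i, ∏ j ∈ Ioi i, ((t i - t j) * (1 - t i * t j)) := by
  have hfactor (i j : Fin m) :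
      t j * (1 + t i ^ 2) - t i * (1 + t j ^ 2) = -((t i - t j) * (1 - t i * t j)) := by ring
  simp only [Matrix.det_projVandermonde, hfactor, prod_prod_Ioi_neg]

theorem add_inv_pow_eq_zpow_mul (u : Rˣ) (k l : ℕ) :
    ((u : R) + ↑u⁻¹) ^ l = ↑(u ^ (-(k + l : ℤ))) * ((u : R) ^ k * (1 + (u : R) ^ 2) ^ l) := by
  have hadd : (u : R) + ↑u⁻¹ = ↑u⁻¹ * (1 + (u : R) ^ 2) := by
    linear_combination -(u : R) * u.inv_mul
  have hzpow : u ^ (-(k + l : ℤ)) * u ^ k = u⁻¹ ^ l := by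
    rw [← zpow_natCast, ← zpow_add, neg_add_rev, neg_add_cancel_right, zpow_neg, zpow_natCast,
      inv_pow]
  calc ((u : R) + ↑u⁻¹) ^ l = ↑(u⁻¹ ^ l) * (1 + (u : R) ^ 2) ^ l := by
        rw [hadd, mul_pow, Units.val_pow_eq_pow_val]
    _ = ↑(u ^ (-(k + l : ℤ))) * ((u : R) ^ k * (1 + (u : R) ^ 2) ^ l) := by
        rw [← hzpow, Units.val_mul, Units.val_pow_eq_pow_val, mul_assoc]

theorem of_add_inv_pow_eq_zpow_mul_projVandermonde (t : Fin m → Rˣ) :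
    Matrix.of (fun i j : Fin m => ((t i : R) + ↑(t i)⁻¹) ^ (m - 1 - (j : ℕ))) =
      Matrix.of fun i j => ((t i ^ (1 - m : ℤ) : Rˣ) : R) *
        projVandermonde (fun i => (t i : R)) (fun i => 1 + (t i : R) ^ 2) i j := by
  ext i j
  have hrev : m - 1 - (j : ℕ) = j.rev := by rw [Fin.val_rev]; lia
  have hexp : (1 - m : ℤ) = -((j : ℕ) + (j.rev : ℕ) : ℤ) := by rw [Fin.val_rev]; lia
  rw [Matrix.of_apply, Matrix.of_apply, Matrix.projVandermonde_apply, hrev, hexp]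
  exact add_inv_pow_eq_zpow_mul (t i) j j.rev

end CommRing

theorem det_pow_add_inv_general {R : Type*} [CommRing R] (m : ℕ) (t : Fin m → Rˣ) :
    Matrix.det (Matrix.of fun i j : Fin m => ((t i : R) + ↑(t i)⁻¹) ^ (m - 1 - (j : ℕ))) =
      (-1 : R) ^ (m * (m - 1) / 2) * (∏ i, ((t i ^ (1 - m : ℤ) : Rˣ) : R)) *
        ∏ i, ∏ j ∈ Ioi i, (((t i : R) - t j) * (1 - (t i : R) * t j)) := by
  rw [of_add_inv_pow_eq_zpow_mul_projVandermonde, Matrix.det_mul_column,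
    det_projVandermonde_one_add_sq, mul_left_comm, mul_assoc]

/-- For a field `K`, `m ≥ 1` and nonzero `t_1, …, t_m ∈ K`,
`det_{1≤i,j≤m}( (t_i + t_i^{−1})^{m−j} )
  = (−1)^{m(m−1)/2} · ∏_{i=1}^{m} t_i^{1−m} · ∏_{1≤i<j≤m} (t_i − t_j)(1 − t_i t_j)`.
(Indices are `0`-based, so the `1`-based exponent `m − j` becomes `m − 1 − j`.) -/
theorem det_pow_add_inv {K : Type*} [Field K] (m : ℕ) (hm : 1 ≤ m) (t : Fin m → K)
    (ht : ∀ i, t i ≠ 0) :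
    Matrix.det (Matrix.of fun i j : Fin m => (t i + (t i)⁻¹) ^ (m - 1 - (j : ℕ))) =
      (-1 : K) ^ (m * (m - 1) / 2) * (∏ i : Fin m, t i ^ ((1 : ℤ) - (m : ℤ))) *
        ∏ i : Fin m, ∏ j ∈ Finset.Ioi i, ((t i - t j) * (1 - t i * t j)) := by
  lift t to Fin m → Kˣ using fun i => (ht i).isUnit
  simpa only [Units.val_inv_eq_inv_val, Units.val_zpow_eq_zpow_val] using
    det_pow_add_inv_general m t
end
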